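/- Let m be a natural number with m ≥ 1. Then ∫_ℝ (2ix³ + x² + 2ix)/((x−i)^{m+3}·(x+i)^m) dx = (2πi/(m+2)!) · g^{(m+2)}(i), where g : ℂ → ℂ is g(z) = (2iz³ + z² + 2iz)/(z+i)^m. -/

import Mathlib

open MeasureTheory Complex

lemma aux_ne (x : ℝ) : (x : ℂ) + I ≠ 0 := by
  intro h
  have := congrArg Complex.im h
  simp at this

lemma aux_ne' (x : ℝ) : (x : ℂ) - I ≠ 0 := by
  intro h
  have := congrArg Complex.im h
  simp at this

lemma aux_norm (x : ℝ) : ‖(x : ℂ) + I‖ = Real.sqrt (1 + x ^ 2) := by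
  rw [Complex.norm_eq_sqrt_sq_add_sq]; simp [add_comm]

lemma aux_norm' (x : ℝ) : ‖(x : ℂ) - I‖ = Real.sqrt (1 + x ^ 2) := by
  rw [Complex.norm_eq_sqrt_sq_add_sq]; simp [add_comm]

lemma aux_one_le (x : ℝ) : 1 ≤ Real.sqrt (1 + x ^ 2) := by
  rw [Real.one_le_sqrt]; nlinarith [sq_nonneg x]

lemma aux_norm_mul (x : ℝ) (k l : ℤ) :
    ‖((x : ℂ) + I) ^ k * ((x : ℂ) - I) ^ l‖ = Real.sqrt (1 + x ^ 2) ^ (k + l) := by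
  rw [norm_mul, norm_zpow, norm_zpow, aux_norm, aux_norm', zpow_add₀]
  have := aux_one_le x
  positivity

lemma aux_cont (k l : ℤ) :
    Continuous (fun x : ℝ => ((x : ℂ) + I) ^ k * ((x : ℂ) - I) ^ l) := by
  refine Continuous.mul ?_ ?_
  · exact Continuous.zpow₀ (by fun_prop) k (fun x => Or.inl (aux_ne x))
  · exact Continuous.zpow₀ (by fun_prop) l (fun x => Or.inl (aux_ne' x))

lemma aux_int (k l : ℤ) (h : k + l ≤ -2) :
    Integrable (fun x : ℝ => ((x : ℂ) + I) ^ k * ((x : ℂ) - I) ^ l) := by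
  refine integrable_inv_one_add_sq.mono' (aux_cont k l).aestronglyMeasurable ?_
  refine Filter.Eventually.of_forall fun x => ?_
  rw [aux_norm_mul]
  refine (zpow_le_zpow_right₀ (aux_one_le x) h).trans (le_of_eq ?_)
  rw [zpow_neg]
  congr 1
  exact_mod_cast Real.sq_sqrt (by positivity)

lemma aux_tendsto (k l : ℤ) (h : k + l ≤ -1) (f : Filter ℝ)
    (hf : Filter.Tendsto (fun x : ℝ => |x|) f Filter.atTop) :
    Filter.Tendsto (fun x : ℝ => ((x : ℂ) + I) ^ k * ((x : ℂ) - I) ^ l) f (nhds 0) := by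
  have h0 : Filter.Tendsto (fun x : ℝ => (|x|)⁻¹) f (nhds 0) :=
    tendsto_inv_atTop_zero.comp hf
  refine squeeze_zero_norm' ?_ h0
  filter_upwards [hf.eventually_gt_atTop 0] with x hx
  rw [aux_norm_mul]
  refine (zpow_le_zpow_right₀ (aux_one_le x) h).trans ?_
  rw [zpow_neg_one]
  gcongr
  apply Real.abs_le_sqrt
  linarith

lemma aux_deriv (k l : ℤ) (x : ℝ) :
    HasDerivAt (fun x : ℝ => ((x : ℂ) + I) ^ k * ((x : ℂ) - I) ^ l)
      (k * (((x : ℂ) + I) ^ (k - 1) * ((x : ℂ) - I) ^ l)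
        + l * (((x : ℂ) + I) ^ k * ((x : ℂ) - I) ^ (l - 1))) x := by
  have h1 : HasDerivAt (fun z : ℂ => (z + I) ^ k) (k * ((x : ℂ) + I) ^ (k - 1) * 1) (x : ℂ) :=
    HasDerivAt.comp (h₂ := fun z : ℂ => z ^ k) (h := fun z : ℂ => z + I) (x : ℂ)
      (hasDerivAt_zpow k ((x : ℂ) + I) (Or.inl (aux_ne x))) ((hasDerivAt_id (x : ℂ)).add_const I)
  have h2 : HasDerivAt (fun z : ℂ => (z - I) ^ l) (l * ((x : ℂ) - I) ^ (l - 1) * 1) (x : ℂ) :=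
    HasDerivAt.comp (h₂ := fun z : ℂ => z ^ l) (h := fun z : ℂ => z - I) (x : ℂ)
      (hasDerivAt_zpow l ((x : ℂ) - I) (Or.inl (aux_ne' x))) ((hasDerivAt_id (x : ℂ)).sub_const I)
  have := (h1.mul h2).comp_ofReal
  refine HasDerivAt.congr_deriv this ?_
  ring

lemma aux_parts (k l : ℤ) (h : k + l ≤ -1) :
    k * (∫ x : ℝ, ((x : ℂ) + I) ^ (k - 1) * ((x : ℂ) - I) ^ l)
      + l * (∫ x : ℝ, ((x : ℂ) + I) ^ k * ((x : ℂ) - I) ^ (l - 1)) = 0 := by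
  have i1 := (aux_int (k - 1) l (by omega)).const_mul (k : ℂ)
  have i2 := (aux_int k (l - 1) (by omega)).const_mul (l : ℂ)
  have := integral_of_hasDerivAt_of_tendsto (aux_deriv k l) (i1.add i2)
    (aux_tendsto k l h _ Filter.tendsto_abs_atBot_atTop)
    (aux_tendsto k l h _ Filter.tendsto_abs_atTop_atTop)
  rw [integral_add i1 i2, integral_const_mul, integral_const_mul] at this
  simpa using this

lemma aux_base (j : ℕ) :
    ∫ x : ℝ, ((x : ℂ) + I) ^ (-(j : ℤ) - 1) * ((x : ℂ) - I) ^ (-1 : ℤ)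
      = 2 * Real.pi * I * (2 * I) ^ (-(j : ℤ) - 1) := by
  have h2I : (2 * I : ℂ) ≠ 0 := by simp
  induction j with
  | zero =>
    have : ∀ x : ℝ, ((x : ℂ) + I) ^ (-((0 : ℕ) : ℤ) - 1) * ((x : ℂ) - I) ^ (-1 : ℤ)
        = (((1 + x ^ 2)⁻¹ : ℝ) : ℂ) := by
      intro x
      simp only [Nat.cast_zero, neg_zero, zero_sub, zpow_neg_one]
      rw [← mul_inv]
      push_cast
      congr 1
      linear_combination -I_sq
    simp_rw [this]
    rw [integral_complex_ofReal, integral_univ_inv_one_add_sq]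
    simp only [Nat.cast_zero, neg_zero, zero_sub, zpow_neg_one]
    field_simp
  | succ j ih =>
    have hz : ∫ x : ℝ, ((x : ℂ) + I) ^ (-(j : ℤ) - 2) * ((x : ℂ) - I) ^ (0 : ℤ) = 0 := by
      have := aux_parts (-(j : ℤ) - 1) 0 (by omega)
      rw [show -(j : ℤ) - 1 - 1 = -(j : ℤ) - 2 by ring] at this
      simp only [Int.cast_zero, zero_mul, add_zero] at this
      rcases mul_eq_zero.1 this with h | h
      · exfalso
        have : (-(j : ℤ) - 1 : ℤ) = 0 := by exact_mod_cast h
        omega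
      · exact h
    have key : ∀ x : ℝ, ((x : ℂ) + I) ^ (-((j + 1 : ℕ) : ℤ) - 1) * ((x : ℂ) - I) ^ (-1 : ℤ)
        = (2 * I)⁻¹ * (((x : ℂ) + I) ^ (-(j : ℤ) - 1) * ((x : ℂ) - I) ^ (-1 : ℤ)
          - ((x : ℂ) + I) ^ (-(j : ℤ) - 2) * ((x : ℂ) - I) ^ (0 : ℤ)) := by
      intro x
      rw [show (-((j + 1 : ℕ) : ℤ) - 1) = -(j : ℤ) - 2 by push_cast; ring,
        show -(j : ℤ) - 1 = (-(j : ℤ) - 2) + 1 by ring, zpow_add_one₀ (aux_ne x)]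
      have := aux_ne' x
      rw [zpow_neg_one, zpow_zero]
      field_simp
      ring
    simp_rw [key]
    rw [integral_const_mul, integral_sub (aux_int _ _ (by omega)) (aux_int _ _ (by omega)), ih, hz,
      show (-((j + 1 : ℕ) : ℤ) - 1) = (-(j : ℤ) - 1) - 1 by push_cast; ring, zpow_sub_one₀ h2I (-(j : ℤ) - 1)]
    generalize (2 * I : ℂ) ^ (-(j : ℤ) - 1) = w
    ring

lemma aux_main (n : ℕ) : ∀ k : ℤ, k ≤ n - 1 →
    ∫ x : ℝ, ((x : ℂ) + I) ^ k * ((x : ℂ) - I) ^ (-(n : ℤ) - 1)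
      = 2 * Real.pi * I / (n.factorial : ℂ) * iteratedDeriv n (fun z : ℂ => (z + I) ^ k) I := by
  induction n with
  | zero =>
    intro k hk
    obtain ⟨j, rfl⟩ : ∃ j : ℕ, k = -(j : ℤ) - 1 := ⟨(-k - 1).toNat, by simp at hk; omega⟩
    simpa [two_mul] using aux_base j
  | succ n ih =>
    intro k hk
    have hd : deriv (fun z : ℂ => (z + I) ^ k) = fun z => (k : ℂ) * (z + I) ^ (k - 1) := by
      funext z
      rw [deriv_comp_add_const (f := fun z : ℂ => z ^ k), deriv_zpow]
    rw [iteratedDeriv_succ', hd, iteratedDeriv_const_mul_field]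
    push_cast at hk
    have h1 := ih (k - 1) (by omega)
    have h2 := aux_parts k (-(n : ℤ) - 1) (by omega)
    rw [h1] at h2
    rw [show (-((n + 1 : ℕ) : ℤ) - 1) = -(n : ℤ) - 1 - 1 by push_cast; ring]
    have hn : ((n : ℂ) + 1) ≠ 0 := by exact_mod_cast Nat.succ_ne_zero n
    have hf : (n.factorial : ℂ) ≠ 0 := by exact_mod_cast n.factorial_ne_zero
    rw [Nat.factorial_succ]
    push_cast at h2 ⊢
    apply mul_left_cancel₀ hn
    field_simp at h2 ⊢
    linear_combination -h2

lemma aux_num (m : ℕ) (z : ℂ) (hz : z + I ≠ 0) :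
    (2 * I * z ^ 3 + z ^ 2 + 2 * I * z) / (z + I) ^ m =
      2 * I * (z + I) ^ (3 - m : ℤ) + 7 * (z + I) ^ (2 - m : ℤ)
        + (-6 * I) * (z + I) ^ (1 - m : ℤ) + (-1) * (z + I) ^ (0 - m : ℤ) := by
  simp only [zpow_sub₀ hz, zpow_natCast]
  have : (z + I) ^ m ≠ 0 := pow_ne_zero _ hz
  field_simp
  linear_combination -(6 * z ^ 2 + 6 * z * I + 2 * I ^ 2 - 1) * I_sq

theorem stmt11 (m : ℕ) (hm : 1 ≤ m) :
    ∫ x : ℝ, (2 * I * (x : ℂ) ^ 3 + (x : ℂ) ^ 2 + 2 * I * (x : ℂ)) /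
        (((x : ℂ) - I) ^ (m + 3) * ((x : ℂ) + I) ^ m) =
      (2 * (Real.pi : ℂ) * I / (Nat.factorial (m + 2) : ℂ)) *
        iteratedDeriv (m + 2)
          (fun z : ℂ => (2 * I * z ^ 3 + z ^ 2 + 2 * I * z) / (z + I) ^ m) I := by
  have hII : I + I ≠ 0 := by rw [← two_mul]; simp
  have hev : (fun z : ℂ => (2 * I * z ^ 3 + z ^ 2 + 2 * I * z) / (z + I) ^ m) =ᶠ[nhds I]
      (fun z : ℂ => 2 * I * (z + I) ^ (3 - m : ℤ) + 7 * (z + I) ^ (2 - m : ℤ)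
        + (-6 * I) * (z + I) ^ (1 - m : ℤ) + (-1) * (z + I) ^ (0 - m : ℤ)) := by
    have : ∀ᶠ z in nhds I, z + I ≠ 0 :=
      (continuous_id.add continuous_const).continuousAt.eventually_ne hII
    filter_upwards [this] with z hz using aux_num m z hz
  have hc : ∀ k : ℤ, ContDiffAt ℂ ((m + 2 : ℕ) : WithTop ℕ∞) (fun z : ℂ => (z + I) ^ k) I := by
    intro k
    have h : AnalyticAt ℂ (fun z : ℂ => (z + I) ^ k) I :=
      AnalyticAt.zpow (analyticAt_id.add analyticAt_const) hII
    exact h.contDiffAt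
  have hc' : ∀ (c : ℂ) (k : ℤ),
      ContDiffAt ℂ ((m + 2 : ℕ) : WithTop ℕ∞) (fun z : ℂ => c * (z + I) ^ k) I :=
    fun c k => contDiffAt_const.mul (hc k)
  have hx : ∀ x : ℝ, (2 * I * (x : ℂ) ^ 3 + (x : ℂ) ^ 2 + 2 * I * (x : ℂ)) /
        (((x : ℂ) - I) ^ (m + 3) * ((x : ℂ) + I) ^ m)
      = 2 * I * (((x : ℂ) + I) ^ (3 - m : ℤ) * ((x : ℂ) - I) ^ (-((m + 2 : ℕ) : ℤ) - 1))
        + 7 * (((x : ℂ) + I) ^ (2 - m : ℤ) * ((x : ℂ) - I) ^ (-((m + 2 : ℕ) : ℤ) - 1))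
        + (-6 * I) * (((x : ℂ) + I) ^ (1 - m : ℤ) * ((x : ℂ) - I) ^ (-((m + 2 : ℕ) : ℤ) - 1))
        + (-1) * (((x : ℂ) + I) ^ (0 - m : ℤ) * ((x : ℂ) - I) ^ (-((m + 2 : ℕ) : ℤ) - 1)) := by
    intro x
    rw [mul_comm (((x : ℂ) - I) ^ (m + 3)), ← div_div, aux_num m x (aux_ne x),
      show (-((m + 2 : ℕ) : ℤ) - 1) = -((m + 3 : ℕ) : ℤ) by push_cast; ring, zpow_neg,
      zpow_natCast, div_eq_mul_inv]
    ring
  simp_rw [hx]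
  have i : ∀ (c : ℂ) (k : ℤ), k ≤ 3 - m → Integrable (fun x : ℝ =>
      c * (((x : ℂ) + I) ^ k * ((x : ℂ) - I) ^ (-((m + 2 : ℕ) : ℤ) - 1))) := fun c k hk =>
    (aux_int _ _ (by push_cast; omega)).const_mul c
  have j1 := i (2 * I) (3 - m) (by omega)
  have j2 := i 7 (2 - m) (by omega)
  have j3 := i (-6 * I) (1 - m) (by omega)
  have j4 := i (-1) (0 - m) (by omega)
  have e1 := integral_add ((j1.add j2).add j3) j4
  have e2 := integral_add (j1.add j2) j3
  have e3 := integral_add j1 j2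
  simp only [Pi.add_apply] at e1 e2 e3
  rw [e1, e2, e3]
  simp only [integral_const_mul]
  rw [aux_main _ _ (by push_cast; omega), aux_main _ _ (by push_cast; omega),
    aux_main _ _ (by push_cast; omega), aux_main _ _ (by push_cast; omega)]
  rw [hev.iteratedDeriv_eq]
  rw [iteratedDeriv_fun_add (((hc' _ _).add (hc' _ _)).add (hc' _ _)) (hc' _ _),
    iteratedDeriv_fun_add ((hc' _ _).add (hc' _ _)) (hc' _ _),
    iteratedDeriv_fun_add (hc' _ _) (hc' _ _)]
  simp only [iteratedDeriv_const_mul_field]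
  ring
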